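/- Let Σ_A(ℕ) be a topologically mixing, finitely primitive (BIP) countable Markov shift, f : Σ_A(ℕ) → ℝ satisfying the Walters condition with Var_1 f < ∞ and P(f) < ∞, and for β > 0 let h_β be the Ruelle eigenfunction of L_{βf}. Then there exist constants C_1 and C_2 (independent of β) such that for all β ≥ 1 and all x ∈ Σ_A(ℕ): e^{C_1 β} ≤ h_β(x) ≤ e^{C_2 β}. -/

import Mathlib

open Filter Topology MeasureTheory
open scoped ENNReal

/-- The countable Markov shift over alphabet ℕ determined by the 0-1 matrix `A`. -/
def MarkovShift (A : ℕ → ℕ → Bool) : Type :=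
  {x : ℕ → ℕ // ∀ i, A (x i) (x (i + 1)) = true}

namespace MarkovShift

variable {A : ℕ → ℕ → Bool}

instance : TopologicalSpace (MarkovShift A) :=
  instTopologicalSpaceSubtype

instance : MeasurableSpace (MarkovShift A) := borel _

instance : BorelSpace (MarkovShift A) := ⟨rfl⟩

/-- The shift map. -/
def shift (x : MarkovShift A) : MarkovShift A :=
  ⟨fun n => x.1 (n + 1), fun i => x.2 (i + 1)⟩

/-- The cylinder set determined by a finite word. -/
def cylinder (w : List ℕ) : Set (MarkovShift A) :=
  {x | ∀ i : Fin w.length, x.1 i = w.get i}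

/-- The cylinder set determined by the first `m` coordinates of `x`. -/
def cylOf (x : MarkovShift A) (m : ℕ) : Set (MarkovShift A) :=
  {y | ∀ i < m, y.1 i = x.1 i}

/-- A symbol is admissible when its cylinder is nonempty. -/
def Admissible (A : ℕ → ℕ → Bool) (a : ℕ) : Prop :=
  ∃ x : MarkovShift A, x.1 0 = a

/-- Topologically mixing. -/
def TopologicallyMixing (A : ℕ → ℕ → Bool) : Prop :=
  ∀ a b : ℕ, Admissible A a → Admissible A b →
    ∃ N : ℕ, ∀ n ≥ N, ∃ x : MarkovShift A, x.1 0 = a ∧ (shift^[n] x).1 0 = b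

/-- Finitely primitive (BIP). -/
def FinitelyPrimitive (A : ℕ → ℕ → Bool) : Prop :=
  ∃ (K₀ : ℕ) (F : Finset ℕ), ∀ a b : ℕ, Admissible A a → Admissible A b →
    ∃ w : List ℕ, w.length = K₀ ∧ (∀ c ∈ w, c ∈ F) ∧
      List.Chain' (fun u v => A u v = true) (a :: (w ++ [b]))

/-- First coordinate where two distinct points disagree. -/
noncomputable def firstDiff (x y : MarkovShift A) (h : x ≠ y) : ℕ :=
  Nat.find (Function.ne_iff.mp (fun hxy : x.1 = y.1 => h (Subtype.ext hxy)))

open Classical in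
/-- The metric `d(x,y) = r^{t(x,y)}`. -/
noncomputable def dist' (r : ℝ) (x y : MarkovShift A) : ℝ :=
  if h : x = y then 0 else r ^ firstDiff x y h

/-- Birkhoff sum `S_n f`. -/
def birkhoff (f : MarkovShift A → ℝ) (n : ℕ) (x : MarkovShift A) : ℝ :=
  ∑ j ∈ Finset.range n, f (shift^[j] x)

/-- The set of values `|S_n f x - S_n f y|` over pairs agreeing on the first `m` coordinates. -/
def varSet (f : MarkovShift A → ℝ) (n m : ℕ) : Set ℝ :=
  {c | ∃ x y : MarkovShift A, (∀ i < m, x.1 i = y.1 i) ∧ c = |birkhoff f n x - birkhoff f n y|}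

/-- `Var_m (S_n f)`. -/
noncomputable def varBirk (f : MarkovShift A → ℝ) (n m : ℕ) : ℝ := sSup (varSet f n m)

/-- `Var_1 f < ∞`. -/
def Var1Finite (f : MarkovShift A → ℝ) : Prop := BddAbove (varSet f 1 1)

/-- The set whose supremum is `sup_{n ≥ 1} Var_{n+k}(S_n f)`. -/
def waltersSet (f : MarkovShift A → ℝ) (k : ℕ) : Set ℝ :=
  {c | ∃ n, 1 ≤ n ∧ c ∈ varSet f n (n + k)}

/-- `M_k = sup_{n ≥ 1} Var_{n+k}(S_n f)`. -/
noncomputable def waltersSup (f : MarkovShift A → ℝ) (k : ℕ) : ℝ := sSup (waltersSet f k)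

/-- The Walters condition. -/
def SatisfiesWalters (f : MarkovShift A → ℝ) : Prop :=
  (∀ k, 1 ≤ k → BddAbove (waltersSet f k)) ∧
    Tendsto (fun k => waltersSup f k) atTop (𝓝 0)

/-- The partition function `Z_n(f,a) = Σ_{σ^n x = x, x₀ = a} e^{S_n f (x)}`. -/
noncomputable def partitionSum (f : MarkovShift A → ℝ) (n : ℕ) (a : ℕ) : ℝ :=
  ∑' x : {x : MarkovShift A // shift^[n] x = x ∧ x.1 0 = a}, Real.exp (birkhoff f n x.1)

/-- `f` has (finite) Gurevich pressure `p`. -/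
def HasGurevichPressure (f : MarkovShift A → ℝ) (p : ℝ) : Prop :=
  ∀ a : ℕ, Admissible A a →
    (∀ n, 1 ≤ n → Summable fun x : {x : MarkovShift A // shift^[n] x = x ∧ x.1 0 = a} =>
        Real.exp (birkhoff f n x.1)) ∧
    Tendsto (fun n : ℕ => (1 / (n : ℝ)) * Real.log (partitionSum f n a)) atTop (𝓝 p)

/-- σ-invariant Borel probability measure. -/
def IsInvariantProb (μ : Measure (MarkovShift A)) : Prop :=
  IsProbabilityMeasure μ ∧ μ.map shift = μ

/-- `m(f)`, the maximal ergodic average. -/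
noncomputable def mf (f : MarkovShift A → ℝ) : ℝ :=
  sSup {c | ∃ μ : Measure (MarkovShift A),
    IsInvariantProb μ ∧ Integrable f μ ∧ ∫ x, f x ∂μ = c}

/-- A maximizing measure for `f`. -/
def IsMaximizing (f : MarkovShift A → ℝ) (μ : Measure (MarkovShift A)) : Prop :=
  IsInvariantProb μ ∧ Integrable f μ ∧ ∫ x, f x ∂μ = mf f

/-- Bounded real valued function. -/
def BoundedFun (g : MarkovShift A → ℝ) : Prop := ∃ C, ∀ x, |g x| ≤ C

/-- A bounded calibrated sub-action for `f`. -/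
def IsCalibratedSubaction (f V : MarkovShift A → ℝ) : Prop :=
  Continuous V ∧ BoundedFun V ∧
    (∀ x, f x + V x - V (shift x) - mf f ≤ 0) ∧
    (∀ y, ∃ x, shift x = y ∧ f x + V x - V (shift x) - mf f = 0)

/-- The Ruelle transfer operator `(L_g u)(x) = Σ_{σ y = x} e^{g(y)} u(y)`. -/
noncomputable def ruelle (g u : MarkovShift A → ℝ) (x : MarkovShift A) : ℝ :=
  ∑' y : {y : MarkovShift A // shift y = x}, Real.exp (g y.1) * u y.1

/-- Ruelle-Perron-Frobenius data for the potential `f` with pressure `p`: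
eigenfunction `h`, eigenmeasure `ν`. -/
def IsRPF (f : MarkovShift A → ℝ) (p : ℝ) (h : MarkovShift A → ℝ)
    (ν : Measure (MarkovShift A)) : Prop :=
  Continuous h ∧ (∀ x, 0 < h x) ∧
    (∀ x, ruelle f h x = Real.exp p * h x) ∧
    IsProbabilityMeasure ν ∧
    (∀ g : MarkovShift A → ℝ, Continuous g → BoundedFun g →
      ∫ x, ruelle f g x ∂ν = Real.exp p * ∫ x, g x ∂ν) ∧
    ∫ x, h x ∂ν = 1

/-- The Gibbs measure `dμ = h dν`. -/
noncomputable def gibbs (h : MarkovShift A → ℝ) (ν : Measure (MarkovShift A)) :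
    Measure (MarkovShift A) :=
  ν.withDensity fun x => ENNReal.ofReal (h x)

/-- The Mañé potential `S_f(x,y)` (with respect to the metric of parameter `r`). -/
noncomputable def manePot (r : ℝ) (f : MarkovShift A → ℝ) (x y : MarkovShift A) : EReal :=
  ⨅ ε : {ε : ℝ // 0 < ε}, ⨆ n : {n : ℕ // 1 ≤ n},
    ⨆ _z : {z : MarkovShift A // dist' r x z < ε.1 ∧ shift^[n.1] z = y},
      ((birkhoff (fun w => f w - mf f) n.1 _z.1 : ℝ) : EReal)

/-- The (topological) support of a measure. -/
def msupport (μ : Measure (MarkovShift A)) : Set (MarkovShift A) :=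
  {x | ∀ U : Set (MarkovShift A), IsOpen U → x ∈ U → 0 < μ U}

end MarkovShift

namespace MarkovShift

/-!
Write `φ = β f - P(β)`, so that the transfer operator `Q` of `φ` fixes `h` and preserves
integrals against `ν`. By finite primitivity, every orbit segment `z₀ … z_{m-1}` can be continued
to a preimage of any given point `x'` under `σ^{m+K}`, at a cost of at most `c = b β + K P(β)` in
the Birkhoff sum. Summed over the fibre of `σ^m` above `x`, this gives
`Q^m g (x) ≤ e^c Q^{m+K} g (x')` for every `g ≥ 0` depending on the first `m` coordinates only.

The eigenfunction `h` is the increasing limit of such functions, its lower envelopes `h_m`, but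
`h_m` is not fixed by `Q`. Still `Q^m h_m (x) ≤ e^c h(x')`; integrating in `x` gives `1 ≤ e^c h`,
and integrating in `x'` gives `Q^m h_m ≤ e^c`. Since also `Q^m h_m ≤ h` and `∫ Q^m h_m dν → ∫ h dν`,
it follows that `h ≤ e^c` almost everywhere, hence everywhere, because `ν` has full support.

Finally `P(β)` grows at most linearly: the bounds at a single `β₀` give `Q_{β₀} 1 ≤ e^{2c₀}`, hence
an upper bound for `f`, and for `β ≥ β₀` one compares `L_{βf} 1` with `L_{β₀f} 1`.
-/

/-! ### The symbolic space -/

section Space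

variable {A : ℕ → ℕ → Bool}

theorem iterate_shift_apply (n : ℕ) (x : MarkovShift A) (i : ℕ) :
    (shift^[n] x).1 i = x.1 (i + n) := by
  induction n generalizing x with
  | zero => rfl
  | succ n ih =>
    rw [Function.iterate_succ_apply, ih]
    rfl

theorem continuous_coord (i : ℕ) : Continuous fun x : MarkovShift A => x.1 i :=
  (continuous_apply i).comp continuous_subtype_val

instance : TopologicalSpace.MetrizableSpace (MarkovShift A) :=
  (Topology.IsEmbedding.subtypeVal
    (p := fun x : ℕ → ℕ => ∀ i, A (x i) (x (i + 1)) = true)).metrizableSpace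

theorem isClopen_setOf_coord (i : ℕ) (p : ℕ → Prop) : IsClopen {x : MarkovShift A | p (x.1 i)} :=
  (isClopen_discrete {b | p b}).preimage (continuous_coord i)

theorem mem_cylOf_self (x : MarkovShift A) (m : ℕ) : x ∈ cylOf x m :=
  fun _ _ => rfl

theorem cylOf_antitone (x : MarkovShift A) : Antitone (cylOf x) :=
  fun _ _ hmn _ hy i hi => hy i (hi.trans_le hmn)

theorem cylOf_eq_of_mem {x y : MarkovShift A} {m : ℕ} (hy : y ∈ cylOf x m) :
    cylOf y m = cylOf x m := by
  ext z
  exact forall₂_congr fun i hi => by rw [hy i hi]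

theorem isOpen_cylOf (x : MarkovShift A) (m : ℕ) : IsOpen (cylOf x m) := by
  have : cylOf x m = ⋂ i ∈ Finset.range m, {y : MarkovShift A | y.1 i = x.1 i} := by
    ext y
    simp [cylOf]
  rw [this]
  exact isOpen_biInter_finset fun i _ => (isClopen_setOf_coord i (· = x.1 i)).isOpen

theorem exists_cylOf_subset {U : Set (MarkovShift A)} (hU : IsOpen U) {x : MarkovShift A}
    (hx : x ∈ U) : ∃ m, cylOf x (m + 1) ⊆ U := by
  obtain ⟨V, hV, rfl⟩ := isOpen_induced_iff.mp hU
  obtain ⟨_, ⟨w, m, rfl⟩, hxw, hwV⟩ :=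
    (PiNat.isTopologicalBasis_cylinders fun _ => ℕ).exists_subset_of_mem_open hx hV
  exact ⟨m, fun y hy => hwV fun i hi => (hy i (hi.trans m.lt_succ_self)).trans (hxw i hi)⟩

theorem eq_of_mem_cylOf_of_iterate_shift_eq {x y : MarkovShift A} {m : ℕ} (hy : y ∈ cylOf x m)
    (h : shift^[m] y = shift^[m] x) : y = x := by
  apply Subtype.ext
  funext i
  rcases lt_or_ge i m with hi | hi
  · exact hy i hi
  · obtain ⟨k, rfl⟩ := Nat.exists_eq_add_of_le' hi
    rw [← iterate_shift_apply, h, iterate_shift_apply]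

/-- The points that may be preceded by the symbol `a`, i.e. the image under the shift of the
cylinder of `a`. -/
def followers (A : ℕ → ℕ → Bool) (a : ℕ) : Set (MarkovShift A) :=
  {x | A a (x.1 0) = true}

theorem measurableSet_followers (a : ℕ) : MeasurableSet (followers A a) :=
  (isClopen_setOf_coord 0 (A a · = true)).isOpen.measurableSet

theorem shift_mem_followers (y : MarkovShift A) : shift y ∈ followers A (y.1 0) :=
  y.2 0

open Classical in
/-- The inverse branch of the shift that prepends the symbol `a`. Outside `followers A a`, where
`a` may not be prepended, it takes the junk value `x`, which makes it continuous everywhere. -/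
noncomputable def cons (a : ℕ) (x : MarkovShift A) : MarkovShift A :=
  if h : x ∈ followers A a then
    ⟨fun n => n.casesOn a x.1, fun i => by
      cases i with
      | zero => exact h
      | succ k => exact x.2 k⟩
  else x

theorem cons_zero {a : ℕ} {x : MarkovShift A} (h : x ∈ followers A a) : (cons a x).1 0 = a := by
  simp [cons, h]

theorem cons_succ {a : ℕ} {x : MarkovShift A} (h : x ∈ followers A a) (n : ℕ) :
    (cons a x).1 (n + 1) = x.1 n := by
  simp [cons, h]

theorem cons_of_notMem {a : ℕ} {x : MarkovShift A} (h : x ∉ followers A a) : cons a x = x :=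
  dif_neg h

theorem shift_cons {a : ℕ} {x : MarkovShift A} (h : x ∈ followers A a) : shift (cons a x) = x :=
  Subtype.ext (funext (cons_succ h))

theorem cons_shift (y : MarkovShift A) : cons (y.1 0) (shift y) = y := by
  apply Subtype.ext
  funext n
  cases n with
  | zero => exact cons_zero (shift_mem_followers y)
  | succ n => exact cons_succ (shift_mem_followers y) n

theorem continuous_cons (a : ℕ) : Continuous (cons a : MarkovShift A → MarkovShift A) := by
  have hclopen : IsClopen (followers A a) := isClopen_setOf_coord 0 (A a · = true)
  refine continuous_induced_rng.mpr (continuous_pi fun n => ?_)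
  rw [← continuousOn_univ, ← Set.union_compl_self (followers A a)]
  refine ContinuousOn.union_of_isOpen ?_ ?_ hclopen.isOpen hclopen.compl.isOpen
  · cases n with
    | zero => exact continuousOn_const.congr fun x hx => cons_zero hx
    | succ n => exact (continuous_coord n).continuousOn.congr fun x hx => cons_succ hx n
  · exact (continuous_coord n).continuousOn.congr fun x hx => congrArg (·.1 n) (cons_of_notMem hx)

/-- The fibre of the shift above `x` is parametrised by the symbols that may precede `x`. -/
noncomputable def fiberEquiv (x : MarkovShift A) :
    {a : ℕ | x ∈ followers A a} ≃ {y : MarkovShift A // shift y = x} where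
  toFun a := ⟨cons a x, shift_cons a.2⟩
  invFun y := ⟨y.1.1 0, by obtain ⟨y, rfl⟩ := y; exact shift_mem_followers y⟩
  left_inv a := Subtype.ext (cons_zero a.2)
  right_inv := by
    rintro ⟨y, rfl⟩
    exact Subtype.ext (cons_shift y)

theorem exists_mem_cylOf_iterate_shift_eq {m : ℕ} {z y : MarkovShift A}
    (h : y ∈ followers A (z.1 m)) : ∃ v ∈ cylOf z (m + 1), shift^[m + 1] v = y := by
  induction m generalizing z with
  | zero =>
    refine ⟨cons (z.1 0) y, fun i hi => ?_, shift_cons h⟩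
    rw [Nat.lt_one_iff.mp hi, cons_zero h]
  | succ m ih =>
    obtain ⟨v, hvz, hvy⟩ := ih (z := shift z) h
    have hv : v ∈ followers A (z.1 0) := by
      change A (z.1 0) (v.1 0) = true
      rw [hvz 0 m.succ_pos]
      exact z.2 0
    refine ⟨cons (z.1 0) v, fun i hi => ?_, ?_⟩
    · cases i with
      | zero => exact cons_zero hv
      | succ i => rw [cons_succ hv, hvz i (Nat.succ_lt_succ_iff.mp hi)]; rfl
    · rw [Function.iterate_succ_apply, shift_cons hv, hvy]

theorem exists_prepend_word {w : List ℕ} {c : ℕ} {x : MarkovShift A}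
    (h : List.IsChain (fun u v => A u v = true) (c :: (w ++ [x.1 0]))) :
    ∃ y ∈ followers A c, shift^[w.length] y = x ∧ ∀ i < w.length, y.1 i ∈ w := by
  induction w generalizing c with
  | nil => exact ⟨x, by simpa [followers] using h, rfl, by simp⟩
  | cons d w ih =>
    rw [List.cons_append, List.isChain_cons_cons] at h
    obtain ⟨y, hyd, hyx, hyw⟩ := ih h.2
    refine ⟨cons d y, ?_, ?_, fun i hi => ?_⟩
    · change A c ((cons d y).1 0) = true
      rw [cons_zero hyd]
      exact h.1
    · rw [List.length_cons, Function.iterate_succ_apply, shift_cons hyd, hyx]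
    · cases i with
      | zero => rw [cons_zero hyd]; exact List.mem_cons_self
      | succ i =>
        rw [cons_succ hyd]
        exact List.mem_cons_of_mem _ (hyw i (Nat.succ_lt_succ_iff.mp hi))

end Space

/-! ### Birkhoff sums -/

section Birkhoff

variable {A : ℕ → ℕ → Bool}

theorem birkhoff_zero (φ : MarkovShift A → ℝ) (x : MarkovShift A) : birkhoff φ 0 x = 0 :=
  Finset.sum_range_zero _

theorem birkhoff_one (φ : MarkovShift A → ℝ) (x : MarkovShift A) : birkhoff φ 1 x = φ x :=
  Finset.sum_range_one _

theorem birkhoff_add (φ : MarkovShift A → ℝ) (m n : ℕ) (x : MarkovShift A) :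
    birkhoff φ (m + n) x = birkhoff φ m x + birkhoff φ n (shift^[m] x) := by
  rw [birkhoff, birkhoff, birkhoff, Finset.sum_range_add]
  simp only [← Function.iterate_add_apply, add_comm m]

theorem birkhoff_succ (φ : MarkovShift A → ℝ) (n : ℕ) (x : MarkovShift A) :
    birkhoff φ (n + 1) x = φ x + birkhoff φ n (shift x) := by
  rw [add_comm n, birkhoff_add, birkhoff_one, Function.iterate_one]

theorem birkhoff_mul_sub_const (f : MarkovShift A → ℝ) (β p : ℝ) (n : ℕ) (x : MarkovShift A) :
    birkhoff (fun x => β * f x - p) n x = β * birkhoff f n x - n * p := by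
  simp [birkhoff, Finset.sum_sub_distrib, Finset.mul_sum]

theorem SatisfiesWalters.continuous {f : MarkovShift A → ℝ} (hW : SatisfiesWalters f) :
    Continuous f := by
  refine continuous_iff_continuousAt.mpr fun x => Metric.tendsto_nhds.mpr fun ε hε => ?_
  obtain ⟨k, hkε, hk⟩ := ((hW.2.eventually (gt_mem_nhds hε)).and (eventually_ge_atTop 1)).exists
  filter_upwards [(isOpen_cylOf x (1 + k)).mem_nhds (mem_cylOf_self x _)] with y hy
  refine (le_csSup (hW.1 k hk) ⟨1, le_rfl, y, x, hy, ?_⟩).trans_lt hkε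
  rw [birkhoff_one, birkhoff_one, Real.dist_eq]

theorem SatisfiesWalters.exists_birkhoff_le {f : MarkovShift A → ℝ} (hW : SatisfiesWalters f)
    (hV : Var1Finite f) :
    ∃ V : ℝ, ∀ (m : ℕ) (x y : MarkovShift A), y ∈ cylOf x (m + 1) →
      birkhoff f (m + 1) x ≤ birkhoff f (m + 1) y + V := by
  obtain ⟨M, hM⟩ := hW.1 1 le_rfl
  obtain ⟨V, hV⟩ := hV
  refine ⟨|M| + V, fun m x y hy => ?_⟩
  have hinit : birkhoff f m x - birkhoff f m y ≤ |M| := by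
    rcases Nat.eq_zero_or_pos m with rfl | hm
    · rw [birkhoff_zero, birkhoff_zero, sub_self]
      exact abs_nonneg M
    · exact (le_abs_self _).trans <|
        (hM ⟨m, hm, x, y, fun i hi => (hy i hi).symm, rfl⟩).trans (le_abs_self M)
  have hlast : birkhoff f 1 (shift^[m] x) - birkhoff f 1 (shift^[m] y) ≤ V := by
    refine (le_abs_self _).trans (hV ⟨shift^[m] x, shift^[m] y, fun i hi => ?_, rfl⟩)
    rw [iterate_shift_apply, iterate_shift_apply]
    exact (hy _ (by omega)).symm
  rw [birkhoff_add, birkhoff_add]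
  linarith

theorem Var1Finite.exists_abs_le {f : MarkovShift A → ℝ} (hV : Var1Finite f) (F : Finset ℕ) :
    ∃ B : ℝ, ∀ y : MarkovShift A, y.1 0 ∈ F → |f y| ≤ B := by
  have hsymbol (a : ℕ) : ∃ B : ℝ, ∀ y : MarkovShift A, y.1 0 = a → |f y| ≤ B := by
    obtain ⟨V, hV⟩ := hV
    by_cases ha : Admissible A a
    · obtain ⟨z, hz⟩ := ha
      refine ⟨|f z| + V, fun y hy => ?_⟩
      have hyz : |birkhoff f 1 y - birkhoff f 1 z| ≤ V := by
        refine hV ⟨y, z, fun i hi => ?_, rfl⟩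
        rw [Nat.lt_one_iff.mp hi, hy, hz]
      rw [birkhoff_one, birkhoff_one] at hyz
      linarith [abs_sub_abs_le_abs_sub (f y) (f z)]
    · exact ⟨0, fun y hy => (ha ⟨y, hy⟩).elim⟩
  choose B hB using hsymbol
  obtain ⟨M, hM⟩ := (F.finite_toSet.image B).bddAbove
  exact ⟨M, fun y hy => (hB _ y rfl).trans (hM (Set.mem_image_of_mem B hy))⟩

/-- Every nonempty initial orbit segment can be continued, after `K` further steps, by any point
`x` of the space, with a loss of at most `b` in the Birkhoff sums of `φ`. -/
def HasGluing (φ : MarkovShift A → ℝ) (K : ℕ) (b : ℝ) : Prop :=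
  ∀ (m : ℕ) (z x : MarkovShift A), ∃ y ∈ cylOf z (m + 1), shift^[m + 1 + K] y = x ∧
    birkhoff φ (m + 1) z ≤ birkhoff φ (m + 1 + K) y + b

theorem FinitelyPrimitive.exists_hasGluing (hbip : FinitelyPrimitive A) {f : MarkovShift A → ℝ}
    (hW : SatisfiesWalters f) (hV : Var1Finite f) : ∃ K b, HasGluing f K b := by
  obtain ⟨K, F, hKF⟩ := hbip
  obtain ⟨V, hV'⟩ := hW.exists_birkhoff_le hV
  obtain ⟨B, hB⟩ := hV.exists_abs_le F
  refine ⟨K, V + K * B, fun m z x => ?_⟩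
  obtain ⟨w, rfl, hwF, hchain⟩ := hKF (z.1 m) (x.1 0)
    ⟨shift^[m] z, by rw [iterate_shift_apply, zero_add]⟩ ⟨x, rfl⟩
  obtain ⟨y, hyz, hyx, hyw⟩ := exists_prepend_word hchain
  obtain ⟨v, hvz, hvy⟩ := exists_mem_cylOf_iterate_shift_eq hyz
  refine ⟨v, hvz, ?_, ?_⟩
  · rw [add_comm, Function.iterate_add_apply, hvy, hyx]
  · have hword : ∑ _j ∈ Finset.range w.length, -B ≤ birkhoff f w.length y := by
      refine Finset.sum_le_sum fun j hj => (abs_le.mp (hB (shift^[j] y) ?_)).1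
      rw [iterate_shift_apply, zero_add]
      exact hwF _ (hyw j (Finset.mem_range.mp hj))
    rw [Finset.sum_const, Finset.card_range, nsmul_eq_mul, mul_neg] at hword
    rw [birkhoff_add f (m + 1) w.length, hvy]
    linarith [hV' m z v hvz]

theorem HasGluing.mul_sub_const {f : MarkovShift A → ℝ} {K : ℕ} {b : ℝ} (hf : HasGluing f K b)
    {β : ℝ} (hβ : 0 ≤ β) (p : ℝ) : HasGluing (fun x => β * f x - p) K (β * b + K * p) := by
  intro m z x
  obtain ⟨y, hyz, hyx, hle⟩ := hf m z x
  refine ⟨y, hyz, hyx, ?_⟩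
  rw [birkhoff_mul_sub_const, birkhoff_mul_sub_const, Nat.cast_add _ K]
  linarith [mul_le_mul_of_nonneg_left hle hβ]

end Birkhoff

/-! ### The transfer operator -/

section Transfer

variable {A : ℕ → ℕ → Bool}

/-- The real exponential, with values in `ℝ≥0∞`. -/
noncomputable def ennexp (t : ℝ) : ℝ≥0∞ := ENNReal.ofReal (Real.exp t)

theorem ennexp_zero : ennexp 0 = 1 := by
  rw [ennexp, Real.exp_zero, ENNReal.ofReal_one]

theorem ennexp_add (s t : ℝ) : ennexp (s + t) = ennexp s * ennexp t := by
  rw [ennexp, Real.exp_add, ENNReal.ofReal_mul (Real.exp_pos s).le]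
  rfl

theorem ennexp_pos (t : ℝ) : 0 < ennexp t :=
  ENNReal.ofReal_pos.mpr (Real.exp_pos t)

theorem ennexp_ne_top (t : ℝ) : ennexp t ≠ ∞ :=
  ENNReal.ofReal_ne_top

theorem ennexp_le_ennexp {s t : ℝ} : ennexp s ≤ ennexp t ↔ s ≤ t := by
  rw [ennexp, ennexp, ENNReal.ofReal_le_ofReal_iff (Real.exp_pos t).le, Real.exp_le_exp]

theorem one_le_ennexp {t : ℝ} : 1 ≤ ennexp t ↔ 0 ≤ t := by
  rw [← ennexp_zero, ennexp_le_ennexp]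

theorem ennexp_neg_mul_cancel (t : ℝ) (c : ℝ≥0∞) : ennexp (-t) * (ennexp t * c) = c := by
  rw [← mul_assoc, ← ennexp_add, neg_add_cancel, ennexp_zero, one_mul]

theorem measurable_ennexp : Measurable ennexp :=
  Real.measurable_exp.ennreal_ofReal

/-- The Ruelle operator on functions with values in `ℝ≥0∞`, where no summability is needed. -/
noncomputable def transfer (φ : MarkovShift A → ℝ) (g : MarkovShift A → ℝ≥0∞)
    (x : MarkovShift A) : ℝ≥0∞ :=
  ∑' y : {y : MarkovShift A // shift y = x}, ennexp (φ y) * g y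

theorem tsum_fiber_comp {α β γ : Type*} (u : α → β) (v : β → γ) (F : α → ℝ≥0∞) (c : γ) :
    ∑' b : {b // v b = c}, ∑' a : {a // u a = b}, F a = ∑' a : {a // v (u a) = c}, F a := by
  rw [← ENNReal.tsum_sigma fun (b : {b // v b = c}) (a : {a // u a = b}) => F a]
  exact (Equiv.sigmaSubtypeFiberEquivSubtype u (p := fun a => v (u a) = c)
    (q := fun b => v b = c) fun _ => Iff.rfl).tsum_eq fun a => F a

theorem iterate_transfer_apply (φ : MarkovShift A → ℝ) (n : ℕ) (g : MarkovShift A → ℝ≥0∞)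
    (x : MarkovShift A) :
    (transfer φ)^[n] g x =
      ∑' y : {y : MarkovShift A // shift^[n] y = x}, ennexp (birkhoff φ n y) * g y := by
  induction n generalizing g with
  | zero =>
    have huniq : ∀ y : {y : MarkovShift A // shift^[0] y = x}, y ≠ ⟨x, rfl⟩ →
        ennexp (birkhoff φ 0 y) * g y = 0 := fun y hy => (hy (Subtype.ext y.2)).elim
    rw [tsum_eq_single _ huniq, birkhoff_zero, ennexp_zero, one_mul, Function.iterate_zero_apply]
  | succ n ih =>
    rw [Function.iterate_succ_apply, ih]
    refine Eq.trans (tsum_congr fun z => ?_) (tsum_fiber_comp shift shift^[n]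
      (fun y => ennexp (birkhoff φ (n + 1) y) * g y) x)
    rw [transfer, ← ENNReal.tsum_mul_left]
    refine tsum_congr fun y => ?_
    rw [birkhoff_succ, y.2, add_comm, ennexp_add, mul_assoc]

theorem transfer_mono (φ : MarkovShift A → ℝ) : Monotone (transfer φ) :=
  fun _ _ h _ => ENNReal.tsum_le_tsum fun _ => mul_le_mul_right (h _) _

theorem transfer_const_mul (φ : MarkovShift A → ℝ) (c : ℝ≥0∞) (g : MarkovShift A → ℝ≥0∞)
    (x : MarkovShift A) : transfer φ (fun y => c * g y) x = c * transfer φ g x := by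
  simp only [transfer, ← ENNReal.tsum_mul_left, mul_left_comm]

theorem transfer_sub_const (φ : MarkovShift A → ℝ) (p : ℝ) (g : MarkovShift A → ℝ≥0∞)
    (x : MarkovShift A) : transfer (fun y => φ y - p) g x = ennexp (-p) * transfer φ g x := by
  simp only [transfer, ← ENNReal.tsum_mul_left, sub_eq_neg_add, ennexp_add, mul_assoc]

theorem ennexp_le_transfer_one (φ : MarkovShift A → ℝ) (y : MarkovShift A) :
    ennexp (φ y) ≤ transfer φ 1 (shift y) := by
  simp only [transfer, Pi.one_apply, mul_one]
  exact ENNReal.le_tsum (f := fun z : {z : MarkovShift A // shift z = shift y} => ennexp (φ z))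
    ⟨y, rfl⟩

theorem ennexp_birkhoff_mul_le_iterate_transfer (φ : MarkovShift A → ℝ) (n : ℕ)
    (g : MarkovShift A → ℝ≥0∞) (y : MarkovShift A) :
    ennexp (birkhoff φ n y) * g y ≤ (transfer φ)^[n] g (shift^[n] y) := by
  rw [iterate_transfer_apply]
  exact ENNReal.le_tsum (f := fun z : {z : MarkovShift A // shift^[n] z = shift^[n] y} =>
    ennexp (birkhoff φ n z) * g z) ⟨y, rfl⟩

theorem transfer_eq_tsum_cons (φ : MarkovShift A → ℝ) (g : MarkovShift A → ℝ≥0∞)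
    (x : MarkovShift A) :
    transfer φ g x =
      ∑' a, (followers A a).indicator (fun x => ennexp (φ (cons a x)) * g (cons a x)) x := by
  rw [transfer, ← (fiberEquiv x).tsum_eq]
  exact tsum_subtype {a | x ∈ followers A a} fun a => ennexp (φ (cons a x)) * g (cons a x)

theorem measurable_ennexp_cons_mul {φ : MarkovShift A → ℝ} (hφ : Measurable φ)
    {g : MarkovShift A → ℝ≥0∞} (hg : Measurable g) (a : ℕ) :
    Measurable fun x : MarkovShift A => ennexp (φ (cons a x)) * g (cons a x) :=
  ((measurable_ennexp.comp hφ).mul hg).comp (continuous_cons a).measurable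

theorem measurable_transfer {φ : MarkovShift A → ℝ} (hφ : Measurable φ)
    {g : MarkovShift A → ℝ≥0∞} (hg : Measurable g) : Measurable (transfer φ g) := by
  rw [funext (transfer_eq_tsum_cons φ g)]
  exact Measurable.tsum fun a =>
    (measurable_ennexp_cons_mul hφ hg a).indicator (measurableSet_followers a)

theorem transfer_ofReal {F u : MarkovShift A → ℝ} (hu : ∀ x, 0 ≤ u x) {x : MarkovShift A}
    (hs : Summable fun y : {y : MarkovShift A // shift y = x} => Real.exp (F y) * u y) :
    transfer F (fun y => ENNReal.ofReal (u y)) x = ENNReal.ofReal (ruelle F u x) := by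
  rw [ruelle, ENNReal.ofReal_tsum_of_nonneg (fun y => mul_nonneg (Real.exp_pos _).le (hu _)) hs]
  exact tsum_congr fun y => (ENNReal.ofReal_mul (Real.exp_pos _).le).symm

/-- Two fibres are compared through `y ↦ y'`, where `y'` continues the first `m + 1` symbols of `y`
towards `x'`; this map is injective because `y` is recovered from those symbols and from `x`. -/
theorem HasGluing.iterate_transfer_le {φ : MarkovShift A → ℝ} {K : ℕ} {b : ℝ}
    (hφ : HasGluing φ K b) {m : ℕ} {g : MarkovShift A → ℝ≥0∞}
    (hg : ∀ y, ∀ y' ∈ cylOf y (m + 1), g y' = g y) (x x' : MarkovShift A) :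
    (transfer φ)^[m + 1] g x ≤ ennexp b * (transfer φ)^[m + 1 + K] g x' := by
  choose glue hcyl hshift hbirk using fun y => hφ m y x'
  let e : {y : MarkovShift A // shift^[m + 1] y = x} →
      {y : MarkovShift A // shift^[m + 1 + K] y = x'} := fun y => ⟨glue y, hshift y⟩
  have he : Function.Injective e := by
    intro y₁ y₂ h
    have hglue : glue y₁ = glue y₂ := congrArg Subtype.val h
    refine Subtype.ext (eq_of_mem_cylOf_of_iterate_shift_eq ?_ (y₁.2.trans y₂.2.symm))
    rw [← cylOf_eq_of_mem (hcyl y₂), ← hglue, cylOf_eq_of_mem (hcyl y₁)]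
    exact mem_cylOf_self _ _
  calc (transfer φ)^[m + 1] g x
      = ∑' y : {y : MarkovShift A // shift^[m + 1] y = x}, ennexp (birkhoff φ (m + 1) y) * g y :=
        iterate_transfer_apply φ _ g x
    _ ≤ ∑' y, ennexp b * (ennexp (birkhoff φ (m + 1 + K) (e y)) * g (e y)) := by
        refine ENNReal.tsum_le_tsum fun y => ?_
        rw [hg y _ (hcyl y), ← mul_assoc, ← ennexp_add, add_comm b]
        exact mul_le_mul_left (ennexp_le_ennexp.mpr (hbirk y)) _
    _ = ennexp b * ∑' y, ennexp (birkhoff φ (m + 1 + K) (e y)) * g (e y) := ENNReal.tsum_mul_left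
    _ ≤ ennexp b * (transfer φ)^[m + 1 + K] g x' := by
        rw [iterate_transfer_apply]
        exact mul_le_mul_right (ENNReal.tsum_comp_le_tsum_of_injective he
          fun y => ennexp (birkhoff φ (m + 1 + K) y) * g y) _

end Transfer

/-! ### Lower envelopes -/

section LowerEnvelope

variable {A : ℕ → ℕ → Bool}

/-- The largest function below `H` that depends on the first `m` coordinates only. -/
noncomputable def lowerEnvelope (H : MarkovShift A → ℝ≥0∞) (m : ℕ) (x : MarkovShift A) : ℝ≥0∞ :=
  ⨅ y ∈ cylOf x m, H y

theorem lowerEnvelope_le (H : MarkovShift A → ℝ≥0∞) (m : ℕ) : lowerEnvelope H m ≤ H :=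
  fun x => iInf₂_le x (mem_cylOf_self x m)

theorem lowerEnvelope_mono (H : MarkovShift A → ℝ≥0∞) : Monotone (lowerEnvelope H) :=
  fun _ _ hmn x => le_iInf₂ fun y hy => iInf₂_le y (cylOf_antitone x hmn hy)

theorem lowerEnvelope_eq_of_mem_cylOf (H : MarkovShift A → ℝ≥0∞) {m : ℕ} {x y : MarkovShift A}
    (hy : y ∈ cylOf x m) : lowerEnvelope H m y = lowerEnvelope H m x := by
  rw [lowerEnvelope, lowerEnvelope, cylOf_eq_of_mem hy]

theorem measurable_lowerEnvelope (H : MarkovShift A → ℝ≥0∞) (m : ℕ) :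
    Measurable (lowerEnvelope H m) := by
  refine ((IsLocallyConstant.iff_eventually_eq _).mpr fun x => ?_).continuous.measurable
  filter_upwards [(isOpen_cylOf x m).mem_nhds (mem_cylOf_self x m)] with y hy
  exact lowerEnvelope_eq_of_mem_cylOf H hy

theorem iSup_lowerEnvelope {H : MarkovShift A → ℝ≥0∞} (hH : Continuous H) (x : MarkovShift A) :
    ⨆ m, lowerEnvelope H (m + 1) x = H x := by
  refine le_antisymm (iSup_le fun m => lowerEnvelope_le H _ x) (le_of_forall_lt fun c hc => ?_)
  obtain ⟨d, hcd, hd⟩ := exists_between hc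
  obtain ⟨m, hm⟩ := exists_cylOf_subset (isOpen_lt continuous_const hH) (x := x) hd
  calc c < d := hcd
    _ ≤ lowerEnvelope H (m + 1) x := le_iInf₂ fun y hy => (hm hy).le
    _ ≤ ⨆ m, lowerEnvelope H (m + 1) x := le_iSup (fun m => lowerEnvelope H (m + 1) x) m

theorem lintegral_eq_iSup_lowerEnvelope {H : MarkovShift A → ℝ≥0∞} (hH : Continuous H)
    (ν : Measure (MarkovShift A)) :
    ∫⁻ x, H x ∂ν = ⨆ m, ∫⁻ x, lowerEnvelope H (m + 1) x ∂ν := by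
  rw [← lintegral_iSup (fun m => measurable_lowerEnvelope H (m + 1))
    fun m n hmn => lowerEnvelope_mono H (Nat.succ_le_succ hmn)]
  simp only [iSup_lowerEnvelope hH]

end LowerEnvelope

/-! ### Eigenfunctions and conformal measures -/

section Conformal

variable {A : ℕ → ℕ → Bool}

/-- The transfer operator of `φ` preserves integrals against `ν`, i.e. `L_φ^* ν = ν`. -/
def IsConformal (φ : MarkovShift A → ℝ) (ν : Measure (MarkovShift A)) : Prop :=
  ∀ g : MarkovShift A → ℝ≥0∞, Measurable g → ∫⁻ x, transfer φ g x ∂ν = ∫⁻ x, g x ∂ν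

variable {φ : MarkovShift A → ℝ} {ν : Measure (MarkovShift A)} {K : ℕ} {b : ℝ}
  {H : MarkovShift A → ℝ≥0∞}

theorem IsConformal.lintegral_iterate_transfer (hν : IsConformal φ ν) (hφ : Measurable φ) (n : ℕ)
    {g : MarkovShift A → ℝ≥0∞} (hg : Measurable g) :
    ∫⁻ x, (transfer φ)^[n] g x ∂ν = ∫⁻ x, g x ∂ν := by
  induction n generalizing g with
  | zero => rfl
  | succ n ih => rw [Function.iterate_succ_apply, ih (measurable_transfer hφ hg), hν g hg]

theorem IsConformal.ennexp_birkhoff_le_measure_cylOf [IsProbabilityMeasure ν]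
    (hν : IsConformal φ ν) (hφ : Measurable φ) (hglue : HasGluing φ K b) (m : ℕ)
    (z : MarkovShift A) :
    ennexp (birkhoff φ (m + 1) z) ≤ ennexp b * ν (cylOf z (m + 1)) := by
  set g : MarkovShift A → ℝ≥0∞ := (cylOf z (m + 1)).indicator 1
  have hcyl := (isOpen_cylOf z (m + 1)).measurableSet
  have hg : Measurable g := measurable_one.indicator hcyl
  have hg_cyl : ∀ y, ∀ y' ∈ cylOf y (m + 1), g y' = g y := by
    intro y y' hy'
    have : y' ∈ cylOf z (m + 1) ↔ y ∈ cylOf z (m + 1) :=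
      forall₂_congr fun i hi => by rw [hy' i hi]
    by_cases hy : y ∈ cylOf z (m + 1) <;> simp [g, this, hy]
  have hpoint (x : MarkovShift A) :
      ennexp (birkhoff φ (m + 1) z) ≤ ennexp b * (transfer φ)^[m + 1 + K] g x := by
    refine le_trans ?_ (hglue.iterate_transfer_le hg_cyl (shift^[m + 1] z) x)
    simpa [g, mem_cylOf_self] using ennexp_birkhoff_mul_le_iterate_transfer φ (m + 1) g z
  calc ennexp (birkhoff φ (m + 1) z)
      = ∫⁻ _, ennexp (birkhoff φ (m + 1) z) ∂ν := by simp
    _ ≤ ∫⁻ x, ennexp b * (transfer φ)^[m + 1 + K] g x ∂ν := lintegral_mono hpoint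
    _ = ennexp b * ν (cylOf z (m + 1)) := by
        rw [lintegral_const_mul' _ _ (ennexp_ne_top _),
          hν.lintegral_iterate_transfer hφ _ hg, lintegral_indicator_one hcyl]

theorem IsConformal.isOpenPosMeasure [IsProbabilityMeasure ν] (hν : IsConformal φ ν)
    (hφ : Measurable φ) (hglue : HasGluing φ K b) : ν.IsOpenPosMeasure where
  open_pos U hU hne := by
    obtain ⟨z, hz⟩ := hne
    obtain ⟨m, hm⟩ := exists_cylOf_subset hU hz
    intro hU0
    have hle := hν.ennexp_birkhoff_le_measure_cylOf hφ hglue m z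
    rw [measure_mono_null hm hU0, mul_zero] at hle
    exact (ennexp_pos _).not_ge hle

theorem iterate_transfer_lowerEnvelope_le (hH : transfer φ H = H) (n m : ℕ) :
    (transfer φ)^[n] (lowerEnvelope H m) ≤ H :=
  ((transfer_mono φ).iterate n (lowerEnvelope_le H m)).trans_eq (Function.iterate_fixed hH n)

theorem HasGluing.iterate_transfer_lowerEnvelope_le (hglue : HasGluing φ K b)
    (hH : transfer φ H = H) (m : ℕ) (x x' : MarkovShift A) :
    (transfer φ)^[m + 1] (lowerEnvelope H (m + 1)) x ≤ ennexp b * H x' :=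
  (hglue.iterate_transfer_le (fun _ _ h => lowerEnvelope_eq_of_mem_cylOf H h) x x').trans
    (mul_le_mul_right (MarkovShift.iterate_transfer_lowerEnvelope_le hH _ _ x') _)

theorem IsConformal.lintegral_eq_iSup_iterate_transfer (hν : IsConformal φ ν) (hφ : Measurable φ)
    (hHc : Continuous H) :
    ∫⁻ x, H x ∂ν = ⨆ m, ∫⁻ x, (transfer φ)^[m + 1] (lowerEnvelope H (m + 1)) x ∂ν := by
  simp only [hν.lintegral_iterate_transfer hφ _ (measurable_lowerEnvelope H _),
    lintegral_eq_iSup_lowerEnvelope hHc]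

variable [IsProbabilityMeasure ν]

theorem IsConformal.lintegral_le_mul_eigenfunction (hν : IsConformal φ ν) (hφ : Measurable φ)
    (hglue : HasGluing φ K b) (hHc : Continuous H) (hH : transfer φ H = H) (x : MarkovShift A) :
    ∫⁻ y, H y ∂ν ≤ ennexp b * H x := by
  rw [hν.lintegral_eq_iSup_iterate_transfer hφ hHc]
  refine iSup_le fun m => ?_
  calc ∫⁻ y, (transfer φ)^[m + 1] (lowerEnvelope H (m + 1)) y ∂ν
      ≤ ∫⁻ _, ennexp b * H x ∂ν :=
        lintegral_mono fun y => hglue.iterate_transfer_lowerEnvelope_le hH m y x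
    _ = ennexp b * H x := by simp

theorem IsConformal.eigenfunction_le_mul_lintegral (hν : IsConformal φ ν) (hφ : Measurable φ)
    (hglue : HasGluing φ K b) (hHc : Continuous H) (hH : transfer φ H = H)
    (x : MarkovShift A) :
    H x ≤ ennexp b * ∫⁻ y, H y ∂ν := by
  rcases eq_or_ne (∫⁻ y, H y ∂ν) ∞ with hint | hint
  · rw [hint, ENNReal.mul_top (ennexp_pos b).ne']
    exact le_top
  set M := ennexp b * ∫⁻ y, H y ∂ν
  have hbound (m : ℕ) (y : MarkovShift A) :
      (transfer φ)^[m + 1] (lowerEnvelope H (m + 1)) y ≤ min (H y) M := by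
    refine le_min (MarkovShift.iterate_transfer_lowerEnvelope_le hH _ _ y) ?_
    calc (transfer φ)^[m + 1] (lowerEnvelope H (m + 1)) y
        = ∫⁻ _, (transfer φ)^[m + 1] (lowerEnvelope H (m + 1)) y ∂ν := by simp
      _ ≤ ∫⁻ x', ennexp b * H x' ∂ν :=
          lintegral_mono fun x' => hglue.iterate_transfer_lowerEnvelope_le hH m y x'
      _ = M := lintegral_const_mul' _ _ (ennexp_ne_top _)
  have hmin_le : (fun y => min (H y) M) ≤ H := fun y => min_le_left _ _
  have hint_le : ∫⁻ y, H y ∂ν ≤ ∫⁻ y, min (H y) M ∂ν := by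
    rw [hν.lintegral_eq_iSup_iterate_transfer hφ hHc]
    exact iSup_le fun m => lintegral_mono (hbound m)
  have hae : (fun y => min (H y) M) =ᵐ[ν] H :=
    ae_eq_of_ae_le_of_lintegral_le (.of_forall hmin_le)
      (ne_top_of_le_ne_top hint (lintegral_mono hmin_le)) hHc.measurable.aemeasurable hint_le
  have := hν.isOpenPosMeasure hφ hglue
  have heq := (Continuous.ae_eq_iff_eq ν (hHc.min continuous_const) hHc).mp hae
  exact min_eq_left_iff.mp (congrFun heq x)

end Conformal

/-! ### Ruelle-Perron-Frobenius data -/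

section RPF

variable {A : ℕ → ℕ → Bool} {F : MarkovShift A → ℝ} {p : ℝ} {h : MarkovShift A → ℝ}
  {ν : Measure (MarkovShift A)}

theorem IsRPF.transfer_eigenfunction (hR : IsRPF F p h ν) :
    transfer (fun x => F x - p) (fun x => ENNReal.ofReal (h x)) =
      fun x => ENNReal.ofReal (h x) := by
  obtain ⟨-, hpos, heig, -⟩ := hR
  funext x
  have hsum : Summable fun y : {y : MarkovShift A // shift y = x} => Real.exp (F y) * h y := by
    by_contra hns
    have hzero : ruelle F h x = 0 := tsum_eq_zero_of_not_summable hns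
    exact (mul_pos (Real.exp_pos p) (hpos x)).ne' (heig x ▸ hzero)
  rw [transfer_sub_const, transfer_ofReal (fun y => (hpos y).le) hsum, heig,
    ENNReal.ofReal_mul (Real.exp_pos p).le]
  exact ennexp_neg_mul_cancel p _

theorem IsRPF.lintegral_eigenfunction (hR : IsRPF F p h ν) :
    ∫⁻ x, ENNReal.ofReal (h x) ∂ν = 1 := by
  obtain ⟨-, hpos, -, -, -, hmass⟩ := hR
  have hint : Integrable h ν := not_imp_comm.mp integral_undef (hmass ▸ one_ne_zero)
  rw [← ofReal_integral_eq_lintegral_ofReal hint (.of_forall fun x => (hpos x).le), hmass,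
    ENNReal.ofReal_one]

theorem ruelle_indicator (F u : MarkovShift A → ℝ) (a : ℕ) (x : MarkovShift A) :
    ruelle F ({y | y.1 0 = a}.indicator u) x =
      (followers A a).indicator (fun x => Real.exp (F (cons a x)) * u (cons a x)) x := by
  by_cases hx : x ∈ followers A a
  · rw [ruelle, tsum_eq_single ⟨cons a x, shift_cons hx⟩, Set.indicator_of_mem hx,
      Set.indicator_of_mem (by exact cons_zero hx)]
    rintro ⟨y, rfl⟩ hy
    rw [Set.indicator_of_notMem, mul_zero]
    rintro rfl
    exact hy (Subtype.ext (cons_shift y).symm)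
  · rw [Set.indicator_of_notMem hx]
    refine (tsum_congr fun y => ?_).trans tsum_zero
    obtain ⟨y, rfl⟩ := y
    rw [Set.indicator_of_notMem, mul_zero]
    rintro rfl
    exact hx (shift_mem_followers y)

theorem IsRPF.setIntegral_cons (hR : IsRPF F p h ν) {u : MarkovShift A → ℝ} (hu : Continuous u)
    (hub : BoundedFun u) (a : ℕ) :
    ∫ x in followers A a, Real.exp (F (cons a x)) * u (cons a x) ∂ν =
      Real.exp p * ∫ x in {y | y.1 0 = a}, u x ∂ν := by
  obtain ⟨-, -, -, -, hdual, -⟩ := hR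
  have hcl : IsClopen {y : MarkovShift A | y.1 0 = a} := isClopen_setOf_coord 0 (· = a)
  obtain ⟨C, hC⟩ := hub
  have hdual_u := hdual _ (hcl.continuous_indicator hu)
    ⟨C, fun x => (norm_indicator_le_norm_self u x).trans (hC x)⟩
  rwa [funext (ruelle_indicator F u a), integral_indicator (measurableSet_followers a),
    integral_indicator hcl.isOpen.measurableSet] at hdual_u

theorem IsRPF.map_cons (hR : IsRPF F p h ν) (hF : Measurable F) {a : ℕ} {B : ℝ}
    (hB : ∀ y : MarkovShift A, y.1 0 = a → F y ≤ B) :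
    ((ν.restrict (followers A a)).withDensity fun x => ennexp (F (cons a x))).map (cons a) =
      ennexp p • ν.restrict {y | y.1 0 = a} := by
  have : IsProbabilityMeasure ν := hR.2.2.2.1
  have hcons := (continuous_cons (A := A) a).measurable
  have hdens : Measurable fun x : MarkovShift A => ennexp (F (cons a x)) :=
    (measurable_ennexp.comp hF).comp hcons
  have hfin : ∫⁻ x in followers A a, ennexp (F (cons a x)) ∂ν ≠ ∞ := by
    refine ((setLIntegral_mono measurable_const fun x hx =>
      ennexp_le_ennexp.mpr (hB _ (cons_zero hx))).trans_lt ?_).ne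
    rw [setLIntegral_const]
    exact ENNReal.mul_lt_top (ennexp_ne_top _).lt_top (measure_lt_top _ _)
  have := isFiniteMeasure_withDensity hfin
  have : IsFiniteMeasure (ennexp p • ν.restrict {y | y.1 0 = a}) :=
    Measure.smul_finite _ (ennexp_ne_top _)
  refine ext_of_forall_integral_eq_of_IsFiniteMeasure fun u => ?_
  rw [integral_map hcons.aemeasurable u.continuous.aestronglyMeasurable,
    integral_withDensity_eq_integral_toReal_smul hdens
      (.of_forall fun _ => (ennexp_ne_top _).lt_top),
    integral_smul_measure]
  simp only [ennexp, ENNReal.toReal_ofReal (Real.exp_pos _).le, smul_eq_mul]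
  exact hR.setIntegral_cons u.continuous ⟨‖u‖, u.norm_coe_le_norm⟩ a

theorem IsRPF.isConformal (hR : IsRPF F p h ν) (hF : Measurable F)
    (hB : ∀ a, ∃ B, ∀ y : MarkovShift A, y.1 0 = a → F y ≤ B) :
    IsConformal (fun x => F x - p) ν := by
  intro g hg
  have hsymbol (a : ℕ) : ∫⁻ x in followers A a, ennexp (F (cons a x)) * g (cons a x) ∂ν =
      ennexp p * ∫⁻ x in {y | y.1 0 = a}, g x ∂ν := by
    obtain ⟨B, hB⟩ := hB a
    have hcons := (continuous_cons (A := A) a).measurable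
    rw [← smul_eq_mul, ← lintegral_smul_measure, ← hR.map_cons hF hB, lintegral_map hg hcons]
    exact (lintegral_withDensity_eq_lintegral_mul _ ((measurable_ennexp.comp hF).comp hcons)
      (hg.comp hcons)).symm
  have hcover : ⋃ a, {y : MarkovShift A | y.1 0 = a} = Set.univ :=
    Set.eq_univ_of_forall fun y => Set.mem_iUnion.mpr ⟨y.1 0, rfl⟩
  have htransfer : ∫⁻ x, transfer F g x ∂ν = ennexp p * ∫⁻ x, g x ∂ν := by
    simp only [transfer_eq_tsum_cons]
    rw [lintegral_tsum fun a => ((measurable_ennexp_cons_mul hF hg a).indicator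
        (measurableSet_followers a)).aemeasurable, ← setLIntegral_univ g, ← hcover,
      lintegral_iUnion (fun a => (isClopen_setOf_coord 0 (· = a)).isOpen.measurableSet)
        fun a b hab => Set.disjoint_left.mpr fun y hya hyb => hab (hya.symm.trans hyb),
      ← ENNReal.tsum_mul_left]
    exact tsum_congr fun a => by
      rw [lintegral_indicator (measurableSet_followers a), hsymbol]
  simp only [transfer_sub_const]
  rw [lintegral_const_mul' _ _ (ennexp_ne_top _), htransfer, ennexp_neg_mul_cancel]

theorem IsRPF.eigenfunction_bounds (hR : IsRPF F p h ν) (hF : Measurable F)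
    (hν : IsConformal (fun x => F x - p) ν) {K : ℕ} {c : ℝ}
    (hglue : HasGluing (fun x => F x - p) K c) (x : MarkovShift A) :
    Real.exp (-c) ≤ h x ∧ h x ≤ Real.exp c := by
  have : IsProbabilityMeasure ν := hR.2.2.2.1
  have hφ : Measurable fun x => F x - p := hF.sub_const p
  have hHc : Continuous fun x => ENNReal.ofReal (h x) := ENNReal.continuous_ofReal.comp hR.1
  have hlow := hν.lintegral_le_mul_eigenfunction hφ hglue hHc hR.transfer_eigenfunction x
  have hupp := hν.eigenfunction_le_mul_lintegral hφ hglue hHc hR.transfer_eigenfunction x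
  rw [hR.lintegral_eigenfunction] at hlow hupp
  constructor
  · rw [ennexp, ← ENNReal.ofReal_mul (Real.exp_pos c).le, ENNReal.one_le_ofReal] at hlow
    rwa [Real.exp_neg, inv_le_iff_one_le_mul₀' (Real.exp_pos c)]
  · rwa [mul_one, ennexp, ENNReal.ofReal_le_ofReal_iff (Real.exp_pos c).le] at hupp

theorem IsRPF.transfer_one_le (hR : IsRPF F p h ν) {c : ℝ}
    (hc : ∀ x, Real.exp (-c) ≤ h x ∧ h x ≤ Real.exp c) (x : MarkovShift A) :
    transfer F 1 x ≤ ennexp (p + 2 * c) := by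
  have hone : (1 : MarkovShift A → ℝ≥0∞) ≤ fun y => ennexp c * ENNReal.ofReal (h y) := fun y =>
    calc (1 : ℝ≥0∞) = ennexp c * ennexp (-c) := by rw [← ennexp_add, add_neg_cancel, ennexp_zero]
      _ ≤ ennexp c * ENNReal.ofReal (h y) :=
        mul_le_mul_right (ENNReal.ofReal_le_ofReal (hc y).1) _
  have hnormalized : transfer (fun y => F y - p) 1 x ≤ ennexp (2 * c) :=
    calc transfer (fun y => F y - p) 1 x
        ≤ ennexp c * ENNReal.ofReal (h x) := by
          refine (transfer_mono _ hone x).trans_eq ?_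
          rw [transfer_const_mul, hR.transfer_eigenfunction]
      _ ≤ ennexp c * ennexp c := mul_le_mul_right (ENNReal.ofReal_le_ofReal (hc x).2) _
      _ = ennexp (2 * c) := by rw [← ennexp_add, two_mul]
  rw [transfer_sub_const] at hnormalized
  calc transfer F 1 x = ennexp p * (ennexp (-p) * transfer F 1 x) := by
        simpa using (ennexp_neg_mul_cancel (-p) (transfer F 1 x)).symm
    _ ≤ ennexp p * ennexp (2 * c) := mul_le_mul_right hnormalized _
    _ = ennexp (p + 2 * c) := (ennexp_add _ _).symm

theorem transfer_one_le_of_le {f : MarkovShift A → ℝ} {β₀ β s : ℝ} (hβ₀ : 0 < β₀) (hβ : β₀ ≤ β)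
    (hs : ∀ x, transfer (fun y => β₀ * f y) 1 x ≤ ennexp (β₀ * s)) (x : MarkovShift A) :
    transfer (fun y => β * f y) 1 x ≤ ennexp (β * s) := by
  have hf (y : MarkovShift A) : f y ≤ s :=
    le_of_mul_le_mul_left (ennexp_le_ennexp.mp ((ennexp_le_transfer_one _ y).trans (hs _))) hβ₀
  calc transfer (fun y => β * f y) 1 x
      ≤ ennexp ((β - β₀) * s) * transfer (fun y => β₀ * f y) 1 x := by
        simp only [transfer, ← ENNReal.tsum_mul_left, Pi.one_apply, mul_one, ← ennexp_add]
        refine ENNReal.tsum_le_tsum fun y => ennexp_le_ennexp.mpr ?_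
        linarith [mul_le_mul_of_nonneg_left (hf y) (sub_nonneg.mpr hβ)]
    _ ≤ ennexp ((β - β₀) * s) * ennexp (β₀ * s) := mul_le_mul_right (hs x) _
    _ = ennexp (β * s) := by rw [← ennexp_add, ← add_mul, sub_add_cancel]

theorem IsConformal.pressure_le [IsProbabilityMeasure ν] (hν : IsConformal (fun x => F x - p) ν)
    {t : ℝ} (ht : ∀ x, transfer F 1 x ≤ ennexp t) : p ≤ t := by
  suffices 1 ≤ ennexp (-p + t) by linarith [one_le_ennexp.mp this]
  calc (1 : ℝ≥0∞) = ∫⁻ x, (1 : MarkovShift A → ℝ≥0∞) x ∂ν := by simp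
    _ = ∫⁻ x, transfer (fun y => F y - p) 1 x ∂ν := (hν 1 measurable_one).symm
    _ ≤ ∫⁻ _, ennexp (-p + t) ∂ν := lintegral_mono fun x => by
        rw [transfer_sub_const, ennexp_add]
        exact mul_le_mul_right (ht x) _
    _ = ennexp (-p + t) := by simp

end RPF

theorem eigenfunction_exponential_bounds_general {A : ℕ → ℕ → Bool} (hbip : FinitelyPrimitive A)
    {f : MarkovShift A → ℝ} (hWalters : SatisfiesWalters f) (hVar1 : Var1Finite f)
    {β₀ p₀ : ℝ} (hβ₀ : 0 < β₀) {h₀ : MarkovShift A → ℝ} {ν₀ : Measure (MarkovShift A)}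
    (hRPF₀ : IsRPF (fun x => β₀ * f x) p₀ h₀ ν₀) :
    ∃ C₁ C₂ : ℝ, ∀ β : ℝ, β₀ ≤ β → ∀ (p : ℝ) (h : MarkovShift A → ℝ) (ν : Measure (MarkovShift A)),
      IsRPF (fun x => β * f x) p h ν → ∀ x : MarkovShift A,
        Real.exp (C₁ * β) ≤ h x ∧ h x ≤ Real.exp (C₂ * β) := by
  obtain ⟨K, b, hglue⟩ := hbip.exists_hasGluing hWalters hVar1
  have hf : Measurable f := hWalters.continuous.measurable
  have hconf {β p h ν} (hβ : 0 < β) (hR : IsRPF (fun x => β * f x) p h ν) :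
      IsConformal (fun x => β * f x - p) ν := by
    refine hR.isConformal (hf.const_mul β) fun a => ?_
    obtain ⟨B, hB⟩ := hVar1.exists_abs_le {a}
    exact ⟨β * B, fun y hy => mul_le_mul_of_nonneg_left
      ((le_abs_self _).trans (hB y (Finset.mem_singleton.mpr hy))) hβ.le⟩
  have hbounds {β p h ν} (hβ : 0 < β) (hR : IsRPF (fun x => β * f x) p h ν) :=
    hR.eigenfunction_bounds (hf.const_mul β) (hconf hβ hR) (hglue.mul_sub_const hβ.le p)
  obtain ⟨s, hs⟩ : ∃ s, p₀ + 2 * (β₀ * b + K * p₀) = β₀ * s := ⟨_, (mul_div_cancel₀ _ hβ₀.ne').symm⟩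
  have hone (x : MarkovShift A) : transfer (fun y => β₀ * f y) 1 x ≤ ennexp (β₀ * s) :=
    hs ▸ hRPF₀.transfer_one_le (hbounds hβ₀ hRPF₀) x
  refine ⟨-(b + K * s), b + K * s, fun β hβ p h ν hR x => ?_⟩
  have hβpos := hβ₀.trans_le hβ
  have : IsProbabilityMeasure ν := hR.2.2.2.1
  have hp : p ≤ β * s := (hconf hβpos hR).pressure_le (transfer_one_le_of_le hβ₀ hβ hone)
  have hc : β * b + K * p ≤ (b + K * s) * β := by
    linarith [mul_le_mul_of_nonneg_left hp K.cast_nonneg]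
  obtain ⟨hlow, hupp⟩ := hbounds hβpos hR x
  exact ⟨(Real.exp_le_exp.mpr (by linarith)).trans hlow, hupp.trans (Real.exp_le_exp.mpr hc)⟩

/-- There are constants `C₁, C₂` with `e^{C₁ β} ≤ h_β ≤ e^{C₂ β}` for all `β ≥ 1`. -/
theorem eigenfunction_exponential_bounds
    (A : ℕ → ℕ → Bool)
    (hmix : TopologicallyMixing A)
    (hbip : FinitelyPrimitive A)
    (f : MarkovShift A → ℝ)
    (hWalters : SatisfiesWalters f)
    (hVar1 : Var1Finite f)
    (P : ℝ → ℝ)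
    (hPfin : HasGurevichPressure f (P 1))
    (h : ℝ → MarkovShift A → ℝ)
    (ν : ℝ → Measure (MarkovShift A))
    (hRPF : ∀ β : ℝ, 0 < β → IsRPF (fun x => β * f x) (P β) (h β) (ν β)) :
    ∃ C₁ C₂ : ℝ, ∀ β : ℝ, 1 ≤ β → ∀ x : MarkovShift A,
      Real.exp (C₁ * β) ≤ h β x ∧ h β x ≤ Real.exp (C₂ * β) := by
  obtain ⟨C₁, C₂, hC⟩ := eigenfunction_exponential_bounds_general hbip hWalters hVar1 one_pos
    (hRPF 1 one_pos)
  exact ⟨C₁, C₂, fun β hβ => hC β hβ _ _ _ (hRPF β (one_pos.trans_le hβ))⟩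

end MarkovShift
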